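/- arXiv:1306.1572 — 2 statements merged into one kernel-verified Lean document; each statement's English description precedes it below -/
import Mathlib

section
/- Let G be a bicolored multigraph on n vertices with red edge set R and black edge set B, let a, b be positive integers with k = a + b, suppose |E| = k·n − k, and tie G down at a vertex u. Call a function t : E → Fin k an [a,b]-tree decomposition if every fiber t⁻¹(i) is a spanning tree of G and t(e) < a for every red edge e. Then there exists a sign function ε assigning to each [a,b]-tree decomposition t a value ε(t) ∈ {1, −1} such that the pure condition satisfies C_G = Σ_t ε(t) · Π_{e ∈ E} X_(e, t e), the sum ranging over all [a,b]-tree decompositions t. -/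
open MvPolynomial

/-- The sub-multigraph with edge set `F` (of a multigraph with endpoint maps
`tail`, `head`) is `(k,ℓ)`-sparse: every nonempty vertex subset `W` induces at
most `k·|W| − ℓ` edges of `F`. -/
def SparseOn {V E : Type} [DecidableEq V] (tail head : E → V) (k ℓ : ℤ)
    (F : Finset E) : Prop :=
  ∀ W : Finset V, W.Nonempty →
    ((F.filter fun e => tail e ∈ W ∧ head e ∈ W).card : ℤ) ≤ k * (W.card : ℤ) - ℓ

/-- The sub-multigraph with edge set `F` of a bicolored multigraph (red edges are
those with `red e = true`) is `[a,b]`-sparse: there is a subset `B'` of the black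
edges of `F` such that the red edges of `F` together with `B'` form an `(a,a)`-sparse
multigraph and the remaining black edges of `F` form a `(b,b)`-sparse multigraph. -/
def ABSparseOn {V E : Type} [DecidableEq V] [DecidableEq E] (tail head : E → V)
    (red : E → Bool) (a b : ℕ) (F : Finset E) : Prop :=
  ∃ B' ⊆ F.filter fun e => red e = false,
    SparseOn tail head (a : ℤ) (a : ℤ) ((F.filter fun e => red e = true) ∪ B') ∧
    SparseOn tail head (b : ℤ) (b : ℤ) ((F.filter fun e => red e = false) \ B')

/-- `T ⊆ E` is a spanning tree: it has `n − 1` edges and the graph on `Fin n`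
with edge set `T` is connected. -/
def IsSpanningTree {n : ℕ} {E : Type} (tail head : E → Fin n) (T : Finset E) : Prop :=
  T.card = n - 1 ∧
    (SimpleGraph.fromRel fun u v => ∃ e ∈ T, tail e = u ∧ head e = v).Connected

/-- The edge set `F` is the disjoint union of `a` spanning trees. -/
def IsTreePartition {n : ℕ} {E : Type} [DecidableEq E] (tail head : E → Fin n)
    (a : ℕ) (F : Finset E) : Prop :=
  ∃ T : Fin a → Finset E, (∀ i, IsSpanningTree tail head (T i)) ∧
    (∀ i j, i ≠ j → Disjoint (T i) (T j)) ∧ Finset.univ.biUnion T = F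

/-- `W` is a proper block of a `(k,k)`-graph on `n` vertices: `2 ≤ |W| < n` and the
induced multigraph on `W` is `(k,k)`-tight (i.e. `(k,k)`-sparse with exactly
`k·|W| − k` induced edges). -/
def IsProperBlock {n : ℕ} {E : Type} [Fintype E] (tail head : E → Fin n) (k : ℕ)
    (W : Finset (Fin n)) : Prop :=
  2 ≤ W.card ∧ W.card < n ∧
    (∀ W' ⊆ W, W'.Nonempty →
      ((Finset.univ.filter fun e => tail e ∈ W' ∧ head e ∈ W').card : ℤ) ≤
        (k : ℤ) * (W'.card : ℤ) - (k : ℤ)) ∧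
    ((Finset.univ.filter fun e => tail e ∈ W ∧ head e ∈ W).card : ℤ) =
      (k : ℤ) * (W.card : ℤ) - (k : ℤ)

/-- The vertex type of the contraction `G/H` by the vertex set `W`: the vertices
outside `W` together with a single new vertex (`Sum.inr ()`). -/
abbrev ContrV (n : ℕ) (W : Finset (Fin n)) : Type := {v : Fin n // v ∉ W} ⊕ Unit

/-- The projection of the vertices of `G` onto the vertices of `G/H`. -/
def contrMap {n : ℕ} (W : Finset (Fin n)) (v : Fin n) : ContrV n W :=
  if h : v ∈ W then Sum.inr () else Sum.inl ⟨v, h⟩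

/-- The pure condition of an `[a,b]`-frame: the determinant of the generic rigidity
matrix with the standard tie-down at `u`.  Rows are indexed by edges `E'` together
with `k` tie-down rows, transported to the column index type `V × Fin k` by the
equivalence `σ`.  The row of an edge `e` has the variable `X (var e, i)` in column
`(tail e, i)` and its negative in column `(head e, i)`, except that rows of red edges
vanish in all columns `(·, i)` with `a ≤ i`.  The `i`-th tie-down row has a `1` in
column `(u, i)` and `0` elsewhere.  The polynomial lives in
`S = MvPolynomial (E × Fin k) ℝ`, the variables of an edge `e` of the (sub)graph
being indexed via `var e : E`. -/
noncomputable def pureCond {E E' V : Type} [Fintype V] [DecidableEq V] (k a : ℕ)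
    (tail head : E' → V) (red : E' → Bool) (var : E' → E) (u : V)
    (σ : (E' ⊕ Fin k) ≃ (V × Fin k)) : MvPolynomial (E × Fin k) ℝ :=
  Matrix.det (Matrix.of fun r c : V × Fin k =>
    Sum.elim
      (fun e =>
        if red e = true ∧ a ≤ (c.2 : ℕ) then 0
        else if c.1 = tail e then (X (var e, c.2) : MvPolynomial (E × Fin k) ℝ)
        else if c.1 = head e then -X (var e, c.2)
        else 0)
      (fun i => if c = (u, i) then 1 else 0)
      (σ.symm r))

/-- The pure condition of a `k`-frame (uncolored body-and-bar setting): the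
determinant of the generic rigidity matrix with the standard tie-down at `u`. -/
noncomputable def pureCondBar {E E' V : Type} [Fintype V] [DecidableEq V] (k : ℕ)
    (tail head : E' → V) (var : E' → E) (u : V)
    (σ : (E' ⊕ Fin k) ≃ (V × Fin k)) : MvPolynomial (E × Fin k) ℝ :=
  pureCond k k tail head (fun _ => false) var u σ

/-- The rigidity matrix `M(G(p))` of an `[a,b]`-frame evaluated at the point `p`
(no tie-down rows). -/
def rigidityMatrixR {E : Type} {n k : ℕ} (a : ℕ) (tail head : E → Fin n)
    (red : E → Bool) (p : E × Fin k → ℝ) : Matrix E (Fin n × Fin k) ℝ :=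
  Matrix.of fun e c =>
    if red e = true ∧ a ≤ (c.2 : ℕ) then 0
    else if c.1 = tail e then p (e, c.2)
    else if c.1 = head e then -p (e, c.2)
    else 0

/-- The edge `e` is in the support of the polynomial `f`: some variable `X (e, i)`
occurs in `f`. -/
def InSupport {E : Type} [DecidableEq E] {k : ℕ} (f : MvPolynomial (E × Fin k) ℝ)
    (e : E) : Prop :=
  ∃ i : Fin k, (e, i) ∈ f.vars

/-- `p` is a generic point of `V(f)`: `f` vanishes at `p` and every polynomial
vanishing at `p` is divisible by `f`. -/
def GenericOn {E : Type} {k : ℕ} (f : MvPolynomial (E × Fin k) ℝ)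
    (p : E × Fin k → ℝ) : Prop :=
  eval p f = 0 ∧ ∀ h : MvPolynomial (E × Fin k) ℝ, eval p h = 0 → f ∣ h

/-- A bicolored multigraph is an `[a,b]`-circuit if it is not `[a,b]`-sparse but every
proper subset of its edge set is `[a,b]`-sparse. -/
def ABCircuit {V E : Type} [Fintype E] [DecidableEq V] [DecidableEq E]
    (tail head : E → V) (red : E → Bool) (a b : ℕ) : Prop :=
  ¬ ABSparseOn tail head red a b (Finset.univ : Finset E) ∧
    ∀ F : Finset E, F ⊂ Finset.univ → ABSparseOn tail head red a b F

/-- An `[a,b]`-graph is irreducible if for every edge `e₀`, adding a new edge parallel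
to `e₀` with the same endpoints and color yields an `[a,b]`-circuit. -/
def ABIrreducibleGraph {V E : Type} [Fintype E] [DecidableEq V] [DecidableEq E]
    (tail head : E → V) (red : E → Bool) (a b : ℕ) : Prop :=
  ∀ e₀ : E,
    ABCircuit (Sum.elim tail fun _ : Unit => tail e₀)
      (Sum.elim head fun _ : Unit => head e₀)
      (Sum.elim red fun _ : Unit => red e₀) a b

/-- The out-degree of the vertex `v` under the orientation `o` (`o e = true` means `e`
is directed from `tail e` to `head e`, `o e = false` the reverse). -/
def outDeg {n : ℕ} {E : Type} [Fintype E] (tail head : E → Fin n) (o : E → Bool)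
    (v : Fin n) : ℕ :=
  (Finset.univ.filter fun e =>
    (o e = true ∧ tail e = v) ∨ (o e = false ∧ head e = v)).card

/-- The orientation `o` has a directed cycle (polygon): a nonempty closed walk
traversing distinct edges, each in its assigned direction. -/
def HasDirCycle {n : ℕ} {E : Type} (tail head : E → Fin n) (o : E → Bool) : Prop :=
  ∃ m : ℕ, 0 < m ∧ ∃ (es : Fin m → E) (vs : Fin (m + 1) → Fin n),
    Function.Injective es ∧ vs 0 = vs (Fin.last m) ∧
    ∀ j : Fin m,
      (o (es j) = true ∧ tail (es j) = vs j.castSucc ∧ head (es j) = vs j.succ) ∨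
      (o (es j) = false ∧ head (es j) = vs j.castSucc ∧ tail (es j) = vs j.succ)

/-!
The rows of the tied-down rigidity matrix are linear in the weights of the edges, so its determinant
is a sum over all assignments `t` of edges to coordinates, and the coefficient of
`∏ e, X (e, t e)` is the determinant of an integral matrix in which the edge `e` only occupies the
block of columns `(·, t e)`. If every fiber of `t` is connected, walking from any vertex to the
tied-down vertex `u` writes each unit vector as an integral combination of rows, so the determinant
is a unit of `ℤ`. If some fiber is disconnected, the indicator of the vertices not reachable from
`u` in it is a kernel vector, so the determinant vanishes. Finally, the number of edges forces
connected fibers to be spanning trees.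
-/

theorem map_sumElim_sum_smul {R M N E K I : Type*} [CommSemiring R] [AddCommMonoid M] [Module R M]
    [AddCommMonoid N] [Module R N] [Fintype E] [DecidableEq E] [Fintype I]
    (f : MultilinearMap R (fun _ : E ⊕ K => M) N) (w : E → I → R) (g : E → I → M) (h : K → M) :
    f (Sum.elim (fun e => ∑ i, w e i • g e i) h) =
      ∑ t : E → I, (∏ e, w e (t e)) • f (Sum.elim (fun e => g e (t e)) h) := by
  have hcurry (y : E → M) : f.currySum y h = f (Sum.elim y h) := rfl
  rw [← hcurry, MultilinearMap.map_sum, sum_apply]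
  refine Finset.sum_congr rfl fun t _ => ?_
  rw [← hcurry, MultilinearMap.map_smul_univ, smul_apply]

theorem isUnit_det_of_span_range_row_eq_top {m R : Type*} [Fintype m] [DecidableEq m] [CommRing R]
    {A : Matrix m m R} (hA : Submodule.span R (Set.range A.row) = ⊤) : IsUnit A.det := by
  rw [← Matrix.isUnit_iff_isUnit_det, ← Matrix.vecMul_surjective_iff_isUnit]
  rw [← range_vecMulLinear] at hA
  exact LinearMap.range_eq_top.1 hA

/-- The simple graph underlying a set `T` of edges of a multigraph, in the form in which it occurs
in `IsSpanningTree`. -/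
def edgeGraph {V E : Type*} (tail head : E → V) (T : Set E) : SimpleGraph V :=
  SimpleGraph.fromRel fun u v => ∃ e ∈ T, tail e = u ∧ head e = v

section edgeGraph

variable {V E : Type*} {tail head : E → V} {T : Set E}

theorem edgeGraph_adj {v w : V} : (edgeGraph tail head T).Adj v w ↔
    v ≠ w ∧ ∃ e ∈ T, (tail e = v ∧ head e = w) ∨ (tail e = w ∧ head e = v) := by
  simp only [edgeGraph, SimpleGraph.fromRel_adj, and_or_left, exists_or]

theorem edgeGraph_reachable_of_mem {e : E} (he : e ∈ T) :
    (edgeGraph tail head T).Reachable (tail e) (head e) := by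
  by_cases hne : tail e = head e
  · rw [hne]
  · exact (edgeGraph_adj.2 ⟨hne, e, he, .inl ⟨rfl, rfl⟩⟩).reachable

theorem edgeSet_edgeGraph_subset :
    (edgeGraph tail head T).edgeSet ⊆ (fun e => s(tail e, head e)) '' T := by
  intro z hz
  induction z with
  | _ v w =>
    obtain ⟨-, e, he, ⟨rfl, rfl⟩ | ⟨rfl, rfl⟩⟩ := edgeGraph_adj.1 hz
    · exact ⟨e, he, rfl⟩
    · exact ⟨e, he, Sym2.eq_swap⟩

theorem card_le_ncard_add_one_of_connected (hT : T.Finite)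
    (h : (edgeGraph tail head T).Connected) : Nat.card V ≤ T.ncard + 1 := calc
  Nat.card V ≤ (edgeGraph tail head T).edgeSet.ncard + 1 := h.card_vert_le_card_edgeSet_add_one
  _ ≤ ((fun e => s(tail e, head e)) '' T).ncard + 1 :=
    Nat.add_le_add_right (Set.ncard_le_ncard edgeSet_edgeGraph_subset (hT.image _)) 1
  _ ≤ T.ncard + 1 := Nat.add_le_add_right (Set.ncard_image_le hT) 1

end edgeGraph

/-- The rigidity matrix of the frame in which the edge `e` has weight `w e i` in the `i`-th
coordinate, followed by the standard tie-down at `u`. A loop has a zero row here, whereas in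
`pureCond` it would keep its entry at the tail. -/
def tiedRigidityMatrix {V E K R : Type*} [DecidableEq V] [Fintype K] [DecidableEq K] [CommRing R]
    (tail head : E → V) (u : V) (w : E → K → R) : Matrix (E ⊕ K) (V × K) R :=
  Matrix.of (Sum.elim
    (fun e => ∑ i, w e i • (Pi.single (tail e, i) 1 - Pi.single (head e, i) 1))
    (fun i => Pi.single (u, i) 1))

/-- The pure condition of the frame in which the edge `e` has weight `w e i` in the `i`-th
coordinate; as in `pureCond`, `σ` matches the rows with the columns. The weights may lie in any
commutative ring: variables give `pureCond`, and integral unit vectors give `treeSign`. -/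
def weightedPureCond {V E K R : Type*} [Fintype V] [DecidableEq V] [Fintype K] [DecidableEq K]
    [CommRing R] (tail head : E → V) (u : V) (σ : E ⊕ K ≃ V × K) (w : E → K → R) : R :=
  ((tiedRigidityMatrix tail head u w).submatrix σ.symm id).det

/-- The sign with which the monomial `∏ e, X (e, t e)` enters the pure condition: the pure
condition in which the edge `e` has the `t e`-th unit vector as its weights. It is `1` or `-1` if
every fiber of `t` is a connected spanning graph, and `0` otherwise. -/
def treeSign {V E K : Type*} [Fintype V] [DecidableEq V] [Fintype K] [DecidableEq K]
    (tail head : E → V) (u : V) (σ : E ⊕ K ≃ V × K) (t : E → K) : ℤ :=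
  weightedPureCond tail head u σ fun e => Pi.single (t e) 1

section weightedPureCond

variable {V E K R : Type*} [DecidableEq V] [Fintype K] [DecidableEq K] [CommRing R]
  {tail head : E → V} {u : V}

theorem tiedRigidityMatrix_inl (w : E → K → R) (e : E) :
    tiedRigidityMatrix tail head u w (Sum.inl e) =
      ∑ i, w e i • (Pi.single (tail e, i) 1 - Pi.single (head e, i) 1) :=
  rfl

theorem tiedRigidityMatrix_inr (w : E → K → R) (i : K) :
    tiedRigidityMatrix tail head u w (Sum.inr i) = Pi.single (u, i) 1 :=
  rfl

theorem tiedRigidityMatrix_inl_apply (w : E → K → R) (e : E) (v : V) (i : K) :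
    tiedRigidityMatrix tail head u w (Sum.inl e) (v, i) =
      w e i * ((if v = tail e then 1 else 0) - if v = head e then 1 else 0) := by
  rw [tiedRigidityMatrix_inl, Finset.sum_apply, Fintype.sum_eq_single i]
  · simp [Pi.single_apply]
  · intro j hj
    simp [hj.symm]

theorem tiedRigidityMatrix_single_inl (t : E → K) (e : E) :
    tiedRigidityMatrix tail head u (fun e => Pi.single (t e) (1 : R)) (Sum.inl e) =
      Pi.single (tail e, t e) 1 - Pi.single (head e, t e) 1 := by
  simp [tiedRigidityMatrix_inl, Pi.single_apply]

theorem span_range_tiedRigidityMatrix_single_eq_top [Finite V] {t : E → K}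
    (h : ∀ i, (edgeGraph tail head (t ⁻¹' {i})).Connected) :
    Submodule.span R
      (Set.range (tiedRigidityMatrix tail head u fun e => Pi.single (t e) (1 : R)).row) = ⊤ := by
  set L := Submodule.span R
    (Set.range (tiedRigidityMatrix tail head u fun e => Pi.single (t e) (1 : R)).row)
  have hedge (e : E) : (Pi.single (tail e, t e) 1 - Pi.single (head e, t e) 1 : V × K → R) ∈ L :=
    Submodule.subset_span ⟨Sum.inl e, tiedRigidityMatrix_single_inl t e⟩
  have hroot (i : K) : (Pi.single (u, i) 1 : V × K → R) ∈ L :=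
    Submodule.subset_span ⟨Sum.inr i, tiedRigidityMatrix_inr _ i⟩
  have hsingle (v : V) (i : K) : (Pi.single (v, i) 1 : V × K → R) ∈ L := by
    obtain ⟨walk⟩ := (h i).preconnected v u
    clear_value L
    induction walk with
    | nil => exact hroot i
    | cons hadj _ ih =>
      obtain ⟨-, e, rfl, ⟨rfl, rfl⟩ | ⟨rfl, rfl⟩⟩ := edgeGraph_adj.1 hadj
      · simpa using L.add_mem (hedge e) (ih hroot)
      · simpa using L.sub_mem (ih hroot) (hedge e)
  rw [eq_top_iff, ← (Pi.basisFun R (V × K)).span_eq, Submodule.span_le]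
  rintro _ ⟨⟨v, i⟩, rfl⟩
  simpa using hsingle v i

variable [Fintype V]

theorem tiedRigidityMatrix_mulVec_inl (w : E → K → R) (y : V × K → R) (e : E) :
    (tiedRigidityMatrix tail head u w).mulVec y (Sum.inl e) =
      ∑ i, w e i * (y (tail e, i) - y (head e, i)) := by
  rw [Matrix.mulVec, tiedRigidityMatrix_inl, sum_dotProduct]
  simp [sub_dotProduct]

theorem tiedRigidityMatrix_mulVec_inr (w : E → K → R) (y : V × K → R) (i : K) :
    (tiedRigidityMatrix tail head u w).mulVec y (Sum.inr i) = y (u, i) := by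
  rw [Matrix.mulVec, tiedRigidityMatrix_inr, single_one_dotProduct]

variable {σ : E ⊕ K ≃ V × K}

theorem map_weightedPureCond {S : Type*} [CommRing S] (f : R →+* S) (w : E → K → R) :
    f (weightedPureCond tail head u σ w) = weightedPureCond tail head u σ fun e i => f (w e i) := by
  rw [weightedPureCond, RingHom.map_det, weightedPureCond]
  congr 1
  ext r ⟨v, i⟩
  obtain ⟨e | j, rfl⟩ := σ.surjective r
  · simp [tiedRigidityMatrix_inl_apply, apply_ite f]
  · simp [tiedRigidityMatrix_inr, Pi.single_apply, apply_ite f]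

theorem weightedPureCond_single (t : E → K) :
    weightedPureCond tail head u σ (fun e => Pi.single (t e) (1 : R)) =
      treeSign tail head u σ t := by
  have hcast (e : E) (i : K) :
      Int.castRingHom R ((Pi.single (t e) 1 : K → ℤ) i) = (Pi.single (t e) 1 : K → R) i := by
    simp [Pi.single_apply]
  rw [treeSign, ← eq_intCast (Int.castRingHom R), map_weightedPureCond]
  simp only [hcast]

theorem weightedPureCond_eq_sum [Fintype E] [DecidableEq E] (w : E → K → R) :
    weightedPureCond tail head u σ w =
      ∑ t : E → K, (∏ e, w e (t e)) * treeSign tail head u σ t := by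
  let f := (Matrix.detRowAlternating (n := V × K) (R := R)).toMultilinearMap.domDomCongr σ.symm
  have hf (w : E → K → R) :
      weightedPureCond tail head u σ w = f (tiedRigidityMatrix tail head u w) := rfl
  rw [hf, tiedRigidityMatrix]
  refine (map_sumElim_sum_smul f w _ _).trans (Finset.sum_congr rfl fun t _ => ?_)
  rw [smul_eq_mul, ← weightedPureCond_single, hf]
  congr 2
  ext (e | i) : 1
  · exact (tiedRigidityMatrix_single_inl t e).symm
  · rfl

theorem isUnit_treeSign {t : E → K} (h : ∀ i, (edgeGraph tail head (t ⁻¹' {i})).Connected) :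
    IsUnit (treeSign tail head u σ t) := by
  refine isUnit_det_of_span_range_row_eq_top ?_
  have hrange := σ.symm.surjective.range_comp
    (tiedRigidityMatrix tail head u fun e => Pi.single (t e) (1 : ℤ)).row
  exact (congrArg (Submodule.span ℤ) hrange).trans (span_range_tiedRigidityMatrix_single_eq_top h)

theorem connected_of_weightedPureCond_ne_zero [NoZeroDivisors R] {w : E → K → R}
    (h : weightedPureCond tail head u σ w ≠ 0) (i : K) :
    (edgeGraph tail head {e | w e i ≠ 0}).Connected := by
  classical
  set G := edgeGraph tail head {e | w e i ≠ 0}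
  have hreach {e : E} (he : w e i ≠ 0) : G.Reachable u (tail e) ↔ G.Reachable u (head e) := by
    have : G.Reachable (tail e) (head e) := edgeGraph_reachable_of_mem he
    exact ⟨fun hr => hr.trans this, fun hr => hr.trans this.symm⟩
  let y : V × K → R := fun c => if c.2 = i ∧ ¬ G.Reachable u c.1 then 1 else 0
  have hy : (tiedRigidityMatrix tail head u w).mulVec y = 0 := by
    ext (e | j)
    · rw [tiedRigidityMatrix_mulVec_inl]
      refine Finset.sum_eq_zero fun j _ => mul_eq_zero.2 (or_iff_not_imp_left.2 fun he => ?_)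
      by_cases hj : j = i
      · simp [y, hreach (hj ▸ he)]
      · simp [y, hj]
    · simp [tiedRigidityMatrix_mulVec_inr, y]
  have hy0 : y = 0 := Matrix.eq_zero_of_mulVec_eq_zero h (funext fun r => congrFun hy (σ.symm r))
  refine (SimpleGraph.connected_iff_exists_forall_reachable _).2 ⟨u, fun v => ?_⟩
  by_contra hv
  have := nontrivial_of_ne _ _ h
  simpa [y, hv] using congrFun hy0 (v, i)

theorem connected_of_treeSign_ne_zero {t : E → K} (h : treeSign tail head u σ t ≠ 0) (i : K) :
    (edgeGraph tail head (t ⁻¹' {i})).Connected := by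
  have hfiber : t ⁻¹' {i} = {e | (Pi.single (t e) 1 : K → ℤ) i ≠ 0} := by
    ext e
    simp [Pi.single_apply, eq_comm]
  exact hfiber ▸ connected_of_weightedPureCond_ne_zero h i

end weightedPureCond

theorem pureCond_eq_weightedPureCond {V E : Type} [Fintype V] [DecidableEq V] {k a : ℕ}
    {tail head : E → V} (hne : ∀ e, tail e ≠ head e) (red : E → Bool) (u : V)
    (σ : (E ⊕ Fin k) ≃ (V × Fin k)) :
    pureCond k a tail head red id u σ = weightedPureCond tail head u σ fun e i =>
      if red e = true → (i : ℕ) < a then (X (e, i) : MvPolynomial (E × Fin k) ℝ) else 0 := by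
  unfold pureCond weightedPureCond
  congr 1
  ext1 r ⟨v, i⟩
  obtain ⟨e | j, rfl⟩ := σ.surjective r
  · have hmask : (red e = true ∧ a ≤ (i : ℕ)) ↔ ¬ (red e = true → (i : ℕ) < a) := by
      rw [Classical.not_imp, not_lt]
    simp only [Matrix.of_apply, Matrix.submatrix_apply, Equiv.symm_apply_apply, Sum.elim_inl, id,
      tiedRigidityMatrix_inl_apply, hmask, ite_not]
    by_cases hv : v = tail e
    · simp [hv, hne e]
    · simp only [if_neg hv]
      split_ifs <;> simp
  · simp [tiedRigidityMatrix_inr, Pi.single_apply]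

/-- `t` is an `[a,b]`-tree decomposition, where `b = k - a`: the edges are partitioned into `k`
spanning trees, and the red edges lie in the first `a` of them. -/
def IsABTreeDecomposition {n k : ℕ} {E : Type} [Fintype E] (tail head : E → Fin n)
    (red : E → Bool) (a : ℕ) (t : E → Fin k) : Prop :=
  (∀ i, IsSpanningTree tail head (Finset.univ.filter fun e => t e = i)) ∧
    ∀ e, red e = true → (t e : ℕ) < a

theorem forall_isSpanningTree_fiber_iff {n k : ℕ} {E : Type} [Fintype E] {tail head : E → Fin n}
    (hE : Fintype.card E + k = n * k) (t : E → Fin k) :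
    (∀ i, IsSpanningTree tail head (Finset.univ.filter fun e => t e = i)) ↔
      ∀ i, (edgeGraph tail head (t ⁻¹' {i})).Connected := by
  have hfiber (i : Fin k) : t ⁻¹' {i} = (Finset.univ.filter fun e => t e = i : Finset E) := by
    ext e
    simp
  simp only [hfiber]
  refine ⟨fun h i => (h i).2, fun h => ?_⟩
  have hle (i : Fin k) (_ : i ∈ Finset.univ) :
      n - 1 ≤ (Finset.univ.filter fun e => t e = i).card := by
    have := card_le_ncard_add_one_of_connected (Finset.finite_toSet _) (h i)
    rw [Nat.card_fin, Set.ncard_coe_finset] at this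
    omega
  have hsum : ∑ _i : Fin k, (n - 1) = ∑ i, (Finset.univ.filter fun e => t e = i).card := by
    rw [← Finset.card_eq_sum_card_fiberwise (fun _ _ => Finset.mem_univ _), Finset.card_univ]
    simp only [Finset.sum_const, Finset.card_univ, Fintype.card_fin, smul_eq_mul, Nat.mul_sub,
      mul_one]
    rw [mul_comm, ← hE, Nat.add_sub_cancel]
  exact fun i => ⟨((Finset.sum_eq_sum_iff_of_le hle).1 hsum i (Finset.mem_univ i)).symm, h i⟩

theorem stmt8_general {n k : ℕ} {E : Type} [Fintype E] [DecidableEq E] (tail head : E → Fin n)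
    (hne : ∀ e, tail e ≠ head e) (red : E → Bool) (a : ℕ) (u : Fin n)
    (σ : (E ⊕ Fin k) ≃ (Fin n × Fin k))
    [hdec : DecidablePred (IsABTreeDecomposition (k := k) tail head red a)] :
    ∃ ε : (E → Fin k) → ℝ,
      (∀ t, IsABTreeDecomposition tail head red a t → (ε t = 1 ∨ ε t = -1)) ∧
      pureCond k a tail head red id u σ =
        ∑ t ∈ Finset.univ.filter (IsABTreeDecomposition (k := k) tail head red a),
          C (ε t) * ∏ e, X (e, t e) := by
  have hE : Fintype.card E + k = n * k := by simpa using Fintype.card_congr σ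
  refine ⟨fun t => treeSign tail head u σ t, fun t ht => ?_, ?_⟩
  · have hunit := isUnit_treeSign (u := u) (σ := σ) ((forall_isSpanningTree_fiber_iff hE t).1 ht.1)
    rcases Int.isUnit_iff.1 hunit with h | h <;> simp [h]
  · rw [pureCond_eq_weightedPureCond hne, weightedPureCond_eq_sum, Finset.sum_filter]
    refine Finset.sum_congr rfl fun t _ => ?_
    rw [Fintype.prod_ite_zero, ite_mul, zero_mul, mul_comm, map_intCast]
    by_cases hsign : treeSign tail head u σ t = 0
    · simp [hsign]
    · have htrees := (forall_isSpanningTree_fiber_iff hE t).2 (connected_of_treeSign_ne_zero hsign)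
      exact if_congr (and_iff_right htrees).symm rfl rfl

open Classical in
/-- the pure condition of a tied-down bicolored graph with `k·n − k`
edges is the signed sum, over all `[a,b]`-tree decompositions `t : E → Fin k`
(fibers are spanning trees and red edges go to trees of index `< a`), of the
monomials `∏ e, X (e, t e)`. -/
theorem stmt8 {n : ℕ} {E : Type} [Fintype E] [DecidableEq E]
    (tail head : E → Fin n) (hlt : ∀ e, tail e < head e)
    (red : E → Bool) (a b : ℕ) (ha : 0 < a) (hb : 0 < b)
    (hE : Fintype.card E = (a + b) * n - (a + b))
    (u : Fin n) (σ : (E ⊕ Fin (a + b)) ≃ (Fin n × Fin (a + b))) :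
    ∃ ε : (E → Fin (a + b)) → ℝ,
      (∀ t : E → Fin (a + b),
        ((∀ i : Fin (a + b),
            IsSpanningTree tail head (Finset.univ.filter fun e => t e = i)) ∧
          ∀ e : E, red e = true → (t e : ℕ) < a) →
          (ε t = 1 ∨ ε t = -1)) ∧
      pureCond (a + b) a tail head red id u σ =
        ∑ t ∈ Finset.univ.filter (fun t : E → Fin (a + b) =>
            (∀ i : Fin (a + b),
              IsSpanningTree tail head (Finset.univ.filter fun e => t e = i)) ∧
            ∀ e : E, red e = true → (t e : ℕ) < a),
          C (ε t) * ∏ e : E, X (e, t e) :=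
  stmt8_general tail head (fun e => (hlt e).ne) red a u σ (hdec := _)
end

section
/- Let G be an [a,b]-graph on n vertices (a, b positive integers, k = a + b) with pure condition C_G (standard tie-down at a vertex u), let f be an irreducible factor of C_G in S, and let e be an edge in the support of f. Then every monomial appearing in f (with nonzero coefficient) is divisible by X_(e,i) for some i ∈ Fin k. -/
open MvPolynomial

/-!
The variables of an edge occur only in its own row of the rigidity matrix, so `C_G` is weighted
homogeneous for any weight that is constant on the variables of each edge. Over a domain a divisor
of a nonzero weighted homogeneous polynomial is weighted homogeneous: giving `X s` the degree `w s`
in an auxiliary variable `T` turns a weighted homogeneous polynomial into a monomial in `T`, and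
divisors of monomials are monomials. Taking the weight `1` on the variables of `e` and `0`
elsewhere, all monomials of `f` have the same degree in the variables of `e`, and this degree is
positive as soon as `e` is in the support of `f`.

It remains to see that `C_G ≠ 0`, i.e. that the rows of the rigidity matrix are linearly independent
for some choice of the coefficients. The `i`-th block of the row of `e` ranges over the line spanned
by the incidence vector of `e` (or over `0`), so by Rado's theorem it suffices to bound the number
of edges in any set `J` by the sum over `i` of the ranks of these blocks. Sparsity of the two parts
of the edge set gives this bound, because an `(a, a)`-sparse graph has at most `a` times as many
edges as its graphic rank. Rado's theorem itself follows by shrinking the subspaces to a minimal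
family satisfying the rank condition, which consists of lines.
-/

section Rado

open Module Submodule

variable {K M ι : Type*} [DivisionRing K] [AddCommGroup M] [Module K M]

variable (K) in
/-- Rado's condition for a family of subspaces: in finite dimension, it is necessary and
sufficient for choosing one vector from each subspace so that the vectors are linearly
independent. (In infinite dimension, `finrank` may be the junk value `0`.) -/
def RadoCondition (U : ι → Submodule K M) : Prop :=
  ∀ J : Finset ι, J.card ≤ finrank K ↥(⨆ i ∈ J, U i)

theorem RadoCondition.update [DecidableEq ι] {U : ι → Submodule K M} (hU : RadoCondition K U)
    {i : ι} {H : Submodule K M}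
    (h : ∀ J : Finset ι, i ∉ J → J.card < finrank K ↥(H ⊔ ⨆ j ∈ J, U j)) :
    RadoCondition K (Function.update U i H) := by
  have iSup_update (J : Finset ι) (hJ : i ∉ J) :
      ⨆ j ∈ J, Function.update U i H j = ⨆ j ∈ J, U j :=
    biSup_congr fun j hj => Function.update_of_ne (ne_of_mem_of_not_mem hj hJ) _ _
  intro J
  by_cases hi : i ∈ J
  · rw [← Finset.insert_erase hi, Finset.iSup_insert, Function.update_self,
      iSup_update _ (Finset.notMem_erase i J), Finset.card_insert_of_notMem (by simp)]
    exact h _ (Finset.notMem_erase i J)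
  · rw [iSup_update J hi]
    exact hU J

theorem RadoCondition.update_or_update [FiniteDimensional K M] [DecidableEq ι]
    {U : ι → Submodule K M} (hU : RadoCondition K U) {i : ι} {H₁ H₂ : Submodule K M}
    (hH : H₁ ⊔ H₂ = U i) :
    RadoCondition K (Function.update U i H₁) ∨ RadoCondition K (Function.update U i H₂) := by
  by_contra! ⟨h₁, h₂⟩
  obtain ⟨J₁, hi₁, hJ₁⟩ : ∃ J : Finset ι, i ∉ J ∧ finrank K ↥(H₁ ⊔ ⨆ j ∈ J, U j) ≤ J.card := by
    by_contra! h
    exact h₁ (hU.update h)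
  obtain ⟨J₂, hi₂, hJ₂⟩ : ∃ J : Finset ι, i ∉ J ∧ finrank K ↥(H₂ ⊔ ⨆ j ∈ J, U j) ≤ J.card := by
    by_contra! h
    exact h₂ (hU.update h)
  set P₁ := H₁ ⊔ ⨆ j ∈ J₁, U j
  set P₂ := H₂ ⊔ ⨆ j ∈ J₂, U j
  have le_sup : ⨆ j ∈ insert i (J₁ ∪ J₂), U j ≤ P₁ ⊔ P₂ := by
    rw [Finset.iSup_insert, Finset.iSup_union, ← hH, sup_sup_sup_comm]
  have le_inf : ⨆ j ∈ J₁ ∩ J₂, U j ≤ P₁ ⊓ P₂ :=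
    le_inf
      (le_sup_of_le_right (biSup_mono fun _ => Finset.mem_of_mem_inter_left))
      (le_sup_of_le_right (biSup_mono fun _ => Finset.mem_of_mem_inter_right))
  have card_union : (J₁ ∪ J₂).card + 1 ≤ finrank K ↥(P₁ ⊔ P₂) := by
    rw [← Finset.card_insert_of_notMem (a := i) (by simp [hi₁, hi₂])]
    exact (hU _).trans (finrank_mono le_sup)
  have card_inter : (J₁ ∩ J₂).card ≤ finrank K ↥(P₁ ⊓ P₂) := (hU _).trans (finrank_mono le_inf)
  have modularity := finrank_sup_add_finrank_inf_eq P₁ P₂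
  have := Finset.card_union_add_card_inter J₁ J₂
  omega

theorem exists_eq_span_singleton_of_supIrred {U : Submodule K M} (hU : SupIrred U) :
    ∃ x, U = span K {x} := by
  obtain ⟨x, hxU, hx⟩ := exists_mem_ne_zero_of_ne_bot hU.ne_bot
  obtain ⟨C, hC⟩ := ComplementedLattice.exists_isCompl (span K {x})
  have hsup : span K {x} ⊔ C ⊓ U = U := by
    rw [← sup_inf_assoc_of_le C (by simpa using hxU), hC.sup_eq_top, top_inf_eq]
  rcases hU.2 hsup with h | h
  · exact ⟨x, h.symm⟩
  · have hxC : x ∈ C := inf_eq_right.mp h hxU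
    exact absurd (disjoint_def.mp hC.disjoint x (mem_span_singleton_self x) hxC) hx

theorem RadoCondition.supIrred_of_minimal [FiniteDimensional K M] {U : ι → Submodule K M}
    (hU : Minimal (RadoCondition K) U) (i : ι) : SupIrred (U i) := by
  classical
  have eq_of_update (H : Submodule K M) (hH : H ≤ U i)
      (h : RadoCondition K (Function.update U i H)) : H = U i := by
    simpa using congrFun (hU.eq_of_le h (update_le_self_iff.mpr hH)) i
  refine ⟨fun hmin => ?_, fun H₁ H₂ hH => ?_⟩
  · simpa [isMin_iff_eq_bot.mp hmin] using hU.prop {i}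
  · exact (hU.prop.update_or_update hH).imp (eq_of_update H₁ (hH ▸ le_sup_left))
      (eq_of_update H₂ (hH ▸ le_sup_right))

theorem RadoCondition.exists_linearIndependent [Finite ι] [FiniteDimensional K M]
    {U : ι → Submodule K M} (hU : RadoCondition K U) :
    ∃ x : ι → M, (∀ i, x i ∈ U i) ∧ LinearIndependent K x := by
  obtain ⟨L, hLU, hL⟩ := exists_minimal_le_of_wellFoundedLT (RadoCondition K) U hU
  choose x hx using fun i =>
    exists_eq_span_singleton_of_supIrred (RadoCondition.supIrred_of_minimal hL i)
  refine ⟨x, fun i => hLU i (hx i ▸ mem_span_singleton_self _), ?_⟩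
  have := Fintype.ofFinite ι
  have hspan : ⨆ i ∈ Finset.univ, L i = span K (Set.range x) := by
    simp_rw [Finset.mem_univ, iSup_pos, hx, span_range_eq_iSup]
  have hcard := hL.prop Finset.univ
  rw [hspan] at hcard
  exact linearIndependent_iff_card_le_finrank_span.mpr hcard

theorem iSup_pi_univ {κ : Type*} [Finite κ] (S : ι → κ → Submodule K M) (J : Finset ι) :
    ⨆ j ∈ J, pi Set.univ (S j) = pi Set.univ fun i => ⨆ j ∈ J, S j i := by
  classical
  simp_rw [← iSup_map_single, Submodule.map_iSup, iSup_comm (ι := κ)]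

theorem finrank_pi_univ {κ : Type*} [Fintype κ] [FiniteDimensional K M] (S : κ → Submodule K M) :
    finrank K ↥(pi Set.univ S) = ∑ i, finrank K ↥(S i) := by
  let e : ↥(pi Set.univ S) ≃ₗ[K] ∀ i, ↥(S i) :=
    { toFun := fun x i => ⟨x.1 i, x.2 i trivial⟩
      invFun := fun y => ⟨fun i => y i, fun i _ => (y i).2⟩
      map_add' := fun _ _ => rfl
      map_smul' := fun _ _ => rfl }
  rw [e.finrank_eq, finrank_pi_fintype]

theorem card_le_sum_finrank_of_subset {κ : Type*} [Fintype κ] [FiniteDimensional K M]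
    {S : ι → κ → Submodule K M} {L : ι → Submodule K M} {F J : Finset ι} (hFJ : F ⊆ J)
    (hL : ∀ j ∈ F, ∀ i, L j ≤ S j i)
    (hF : F.card ≤ Fintype.card κ * finrank K ↥(⨆ j ∈ F, L j)) :
    F.card ≤ ∑ i, finrank K ↥(⨆ j ∈ J, S j i) := by
  refine hF.trans ?_
  rw [← smul_eq_mul, ← Finset.card_univ, ← Finset.sum_const]
  refine Finset.sum_le_sum fun i _ => finrank_mono (iSup₂_le fun j hj => ?_)
  exact (hL j hj i).trans (le_biSup (fun j => S j i) (hFJ hj))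

theorem exists_linearIndependent_of_card_le_sum_finrank {κ : Type*} [Fintype κ] [Finite ι]
    [FiniteDimensional K M] (S : ι → κ → Submodule K M)
    (hS : ∀ J : Finset ι, J.card ≤ ∑ i, finrank K ↥(⨆ j ∈ J, S j i)) :
    ∃ x : ι → κ → M, (∀ j i, x j i ∈ S j i) ∧ LinearIndependent K x := by
  have hrado : RadoCondition K fun j => pi Set.univ (S j) := fun J => by
    rw [iSup_pi_univ, finrank_pi_univ]
    exact hS J
  obtain ⟨x, hx, hli⟩ := hrado.exists_linearIndependent
  exact ⟨x, fun j i => hx j i trivial, hli⟩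

end Rado

section WeightedHomogeneous

variable {τ R : Type*}

section CommSemiring

variable [CommSemiring R] (w : τ → ℕ)

/-- The algebra homomorphism sending each variable `X s` to `T ^ w s * X s`, where `T` is the
variable of the outer polynomial ring: it turns the weight of a monomial into its degree in `T`. -/
noncomputable def weightScaling : MvPolynomial τ R →ₐ[R] Polynomial (MvPolynomial τ R) :=
  aeval fun s => Polynomial.monomial (w s) (X s)

theorem weightScaling_monomial (m : τ →₀ ℕ) (r : R) :
    weightScaling w (monomial m r) =
      Polynomial.monomial (Finsupp.weight w m) (monomial m r) := by
  induction m using Finsupp.induction generalizing r with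
  | zero =>
    rw [← C_apply, weightScaling, ← algebraMap_eq, AlgHom.commutes, algebraMap_eq, map_zero]
    rfl
  | single_add s j m _ _ ih =>
    rw [monomial_single_add, map_mul, ih, map_pow, weightScaling, aeval_X,
      Polynomial.monomial_pow, Polynomial.monomial_mul_monomial, map_add, Finsupp.weight_single,
      smul_eq_mul, mul_comm (w s)]

theorem coeff_weightScaling (p : MvPolynomial τ R) (j : ℕ) :
    (weightScaling w p).coeff j = weightedHomogeneousComponent w j p := by
  induction p using MvPolynomial.induction_on' with
  | monomial m r =>
    rw [weightScaling_monomial, Polynomial.coeff_monomial,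
      weightedHomogeneousComponent_of_mem (isWeightedHomogeneous_monomial w m r rfl)]
    simp only [eq_comm]
  | add p q hp hq => rw [map_add, Polynomial.coeff_add, hp, hq, map_add]

theorem eval_one_weightScaling (p : MvPolynomial τ R) : (weightScaling w p).eval 1 = p := by
  induction p using MvPolynomial.induction_on' with
  | monomial m r => rw [weightScaling_monomial, Polynomial.eval_monomial, one_pow, mul_one]
  | add p q hp hq => rw [map_add, Polynomial.eval_add, hp, hq]

variable {w}

theorem weightScaling_of_isWeightedHomogeneous {p : MvPolynomial τ R} {d : ℕ}
    (hp : IsWeightedHomogeneous w p d) : weightScaling w p = Polynomial.monomial d p := by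
  refine Polynomial.ext fun j => ?_
  rw [coeff_weightScaling, weightedHomogeneousComponent_of_mem hp, Polynomial.coeff_monomial]
  simp only [eq_comm]

theorem isWeightedHomogeneous_of_weightScaling_eq_monomial {p c : MvPolynomial τ R} {d : ℕ}
    (hp : weightScaling w p = Polynomial.monomial d c) : IsWeightedHomogeneous w p d := by
  have hpc : p = c := by
    rw [← eval_one_weightScaling w p, hp, Polynomial.eval_monomial, one_pow, mul_one]
  have hcomp : weightedHomogeneousComponent w d p = p := by
    rw [← coeff_weightScaling, hp, Polynomial.coeff_monomial_same, hpc]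
  exact hcomp ▸ weightedHomogeneousComponent_isWeightedHomogeneous d p

theorem exists_mem_support_of_isWeightedHomogeneous {f : MvPolynomial τ R} {d : ℕ}
    (hf : IsWeightedHomogeneous w f d) {s : τ} (hs : s ∈ f.vars) (hws : w s ≠ 0)
    {m : τ →₀ ℕ} (hm : m ∈ f.support) : ∃ t ∈ m.support, w t ≠ 0 := by
  obtain ⟨m₀, hm₀, hsm₀⟩ := (mem_vars_iff_mem_support s).mp hs
  by_contra! hzero
  have hweight : Finsupp.weight w m = 0 := by
    rw [Finsupp.weight_apply]
    exact Finset.sum_eq_zero fun t ht => by simp only [hzero t ht, smul_zero]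
  have hd : d = 0 := (hf (mem_support_iff.mp hm)).symm.trans hweight
  have hle := Finsupp.le_weight w hws m₀
  rw [hf (mem_support_iff.mp hm₀), hd] at hle
  exact Finsupp.mem_support_iff.mp hsm₀ (Nat.le_zero.mp hle)

end CommSemiring

theorem exists_eq_monomial_of_dvd_monomial [Semiring R] [NoZeroDivisors R] {p : Polynomial R}
    {d : ℕ} {r : R} (hr : r ≠ 0) (hp : p ∣ Polynomial.monomial d r) :
    ∃ n c, p = Polynomial.monomial n c := by
  obtain ⟨q, hpq⟩ := hp
  have hne : p * q ≠ 0 := by simpa [← hpq] using hr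
  have hp0 := left_ne_zero_of_mul hne
  have hq0 := right_ne_zero_of_mul hne
  have hdeg := Polynomial.natDegree_mul hp0 hq0
  have htrail := Polynomial.natTrailingDegree_mul hp0 hq0
  rw [← hpq, Polynomial.natDegree_monomial_eq _ hr] at hdeg
  rw [← hpq, Polynomial.natTrailingDegree_monomial hr] at htrail
  have hp_le := p.natTrailingDegree_le_natDegree
  have hq_le := q.natTrailingDegree_le_natDegree
  refine ⟨p.natDegree, p.leadingCoeff, Polynomial.ext fun j => ?_⟩
  rw [Polynomial.coeff_monomial]
  split_ifs with hj
  · rw [← hj, Polynomial.coeff_natDegree]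
  · rcases lt_or_gt_of_ne hj with h | h
    · exact Polynomial.coeff_eq_zero_of_natDegree_lt h
    · exact Polynomial.coeff_eq_zero_of_lt_natTrailingDegree (by omega)

theorem isWeightedHomogeneous_of_dvd [CommSemiring R] [NoZeroDivisors R] {w : τ → ℕ}
    {p f : MvPolynomial τ R} {d : ℕ} (hp : IsWeightedHomogeneous w p d) (hp0 : p ≠ 0)
    (hf : f ∣ p) : ∃ d', IsWeightedHomogeneous w f d' := by
  have hdvd : weightScaling w f ∣ Polynomial.monomial d p :=
    weightScaling_of_isWeightedHomogeneous hp ▸ map_dvd (weightScaling w) hf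
  obtain ⟨d', c, h⟩ := exists_eq_monomial_of_dvd_monomial hp0 hdvd
  exact ⟨d', isWeightedHomogeneous_of_weightScaling_eq_monomial h⟩

theorem isWeightedHomogeneous_det {ι : Type*} [Fintype ι] [DecidableEq ι] [CommRing R]
    {w : τ → ℕ} {M : Matrix ι ι (MvPolynomial τ R)} {d : ι → ℕ}
    (hM : ∀ r c, IsWeightedHomogeneous w (M r c) (d r)) :
    IsWeightedHomogeneous w M.det (∑ r, d r) := by
  rw [Matrix.det_apply]
  refine IsWeightedHomogeneous.sum _ _ _ fun π _ => ?_
  rw [← Equiv.sum_comp π d]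
  exact (weightedHomogeneousSubmodule R w _).smul_of_tower_mem _
    (IsWeightedHomogeneous.prod _ _ _ fun c _ => hM (π c) c)

end WeightedHomogeneous

section Sparsity

open Module Submodule

variable {V E : Type} {tail head : E → V}

theorem SparseOn.mono [DecidableEq V] {k ℓ : ℤ} {F F' : Finset E}
    (h : SparseOn tail head k ℓ F) (hF : F' ⊆ F) : SparseOn tail head k ℓ F' := fun W hW =>
  (Int.ofNat_le.mpr (Finset.card_le_card (Finset.filter_subset_filter _ hF))).trans (h W hW)

-- Every edge of `F` is induced by a fiber of `π`, and each fiber satisfies the sparsity bound.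
theorem SparseOn.card_le_of_forall_map_eq [Fintype V] [DecidableEq V] {Q : Type*} [DecidableEq Q]
    {k ℓ : ℤ} {F : Finset E} (h : SparseOn tail head k ℓ F) (π : V → Q)
    (hπ : ∀ e ∈ F, π (tail e) = π (head e)) :
    (F.card : ℤ) ≤ k * Fintype.card V - ℓ * (Finset.univ.image π).card := by
  let fiber (q : Q) : Finset V := {v | π v = q}
  have fiber_bound : ∀ q ∈ Finset.univ.image π,
      ((F.filter fun e => π (tail e) = q).card : ℤ) ≤ k * (fiber q).card - ℓ := by
    intro q hq
    obtain ⟨v, -, rfl⟩ := Finset.mem_image.mp hq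
    refine le_trans (Int.ofNat_le.mpr (Finset.card_le_card fun e he => ?_))
      (h (fiber (π v)) ⟨v, by simp [fiber]⟩)
    obtain ⟨heF, hev⟩ := Finset.mem_filter.mp he
    simp [fiber, heF, hev, ← hπ e heF]
  calc (F.card : ℤ)
      = ∑ q ∈ Finset.univ.image π, ((F.filter fun e => π (tail e) = q).card : ℤ) := by
        rw [Finset.card_eq_sum_card_fiberwise (f := fun e => π (tail e))
          (t := Finset.univ.image π) fun e _ => by simp]
        push_cast
        rfl
    _ ≤ ∑ q ∈ Finset.univ.image π, (k * (fiber q).card - ℓ) := Finset.sum_le_sum fiber_bound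
    _ = k * Fintype.card V - ℓ * (Finset.univ.image π).card := by
        rw [Finset.sum_sub_distrib, ← Finset.mul_sum, Finset.sum_const, nsmul_eq_mul, mul_comm ℓ,
          ← Finset.card_univ, Finset.card_eq_sum_card_image π Finset.univ]
        push_cast
        rfl

theorem finrank_quotient_le_card_image_single {K : Type*} [DivisionRing K] [Fintype V]
    [DecidableEq V] (S : Submodule K (V → K)) [DecidableEq ((V → K) ⧸ S)] :
    finrank K ((V → K) ⧸ S) ≤ (Finset.univ.image fun v => S.mkQ (Pi.single v 1)).card := by
  have hspan : span K (Set.range fun v => S.mkQ (Pi.single v 1)) = ⊤ := by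
    have := congrArg (Submodule.map S.mkQ) (Pi.basisFun K V).span_eq
    rw [map_span, ← Set.range_comp, Submodule.map_top, range_mkQ] at this
    simpa [Function.comp_def] using this
  rw [← finrank_top, ← hspan, ← Set.image_univ, ← Finset.coe_univ, ← Finset.coe_image]
  exact finrank_span_finset_le_card _

/-- The signed incidence vector of the edge `e`; over a field, the rank of the incidence vectors of
a set of edges is its rank in the graphic matroid. -/
def incidenceVec (R : Type*) [Ring R] [DecidableEq V] (tail head : E → V) (e : E) : V → R :=
  Pi.single (tail e) 1 - Pi.single (head e) 1

theorem SparseOn.card_le_mul_finrank (K : Type*) [DivisionRing K] [Finite V] [DecidableEq V] {a : ℕ}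
    {F : Finset E} (h : SparseOn tail head a a F) :
    F.card ≤ a * finrank K ↥(⨆ e ∈ F, span K {incidenceVec K tail head e}) := by
  classical
  have := Fintype.ofFinite V
  set S := ⨆ e ∈ F, span K {incidenceVec K tail head e}
  let π (v : V) : (V → K) ⧸ S := S.mkQ (Pi.single v 1)
  have hπ : ∀ e ∈ F, π (tail e) = π (head e) := fun e he =>
    (Submodule.Quotient.eq S).mpr
      (le_biSup (fun e => span K {incidenceVec K tail head e}) he (mem_span_singleton_self _))
  have hsparse := h.card_le_of_forall_map_eq π hπ
  have hrank : Fintype.card V ≤ (Finset.univ.image π).card + finrank K S := by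
    rw [← finrank_fintype_fun_eq_card K, ← S.finrank_quotient_add_finrank]
    exact Nat.add_le_add_right (finrank_quotient_le_card_image_single S) _
  zify at hrank ⊢
  nlinarith

/-- The space of possible `i`-th blocks, indexed by the vertices, of the row of the edge `e` in a
rigidity matrix. -/
def blockSpace (K : Type*) [DivisionRing K] [DecidableEq V] {k : ℕ} (a : ℕ) (tail head : E → V)
    (red : E → Bool) (e : E) (i : Fin k) : Submodule K (V → K) :=
  if red e = true ∧ a ≤ (i : ℕ) then ⊥ else span K {incidenceVec K tail head e}

variable {red : E → Bool} {a b : ℕ}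

theorem blockSpace_eq_span (K : Type*) [DivisionRing K] [DecidableEq V] {k : ℕ} {e : E} {i : Fin k}
    (h : ¬(red e = true ∧ a ≤ (i : ℕ))) :
    blockSpace K a tail head red e i = span K {incidenceVec K tail head e} :=
  if_neg h

theorem ABSparseOn.card_le_sum_finrank_blockSpace (K : Type*) [DivisionRing K] [Finite V]
    [DecidableEq V] [DecidableEq E] {F : Finset E} (h : ABSparseOn tail head red a b F)
    {J : Finset E} (hJ : J ⊆ F) :
    J.card ≤ ∑ i : Fin (a + b), finrank K ↥(⨆ e ∈ J, blockSpace K a tail head red e i) := by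
  obtain ⟨B', -, hA, hB⟩ := h
  set P := (F.filter fun e => red e = true) ∪ B' with hP
  have black : ∀ e ∈ J \ P, red e = false ∧ e ∉ B' := by
    intro e he
    simp only [hP, Finset.mem_sdiff, Finset.mem_union, Finset.mem_filter] at he
    simpa [hJ he.1] using he.2
  have hJP : (J ∩ P).card ≤ ∑ i : Fin a,
      finrank K ↥(⨆ e ∈ J, blockSpace K a tail head red e (Fin.castAdd b i)) := by
    refine card_le_sum_finrank_of_subset Finset.inter_subset_left
      (fun e _ i => (blockSpace_eq_span K (by simp)).ge) ?_
    rw [Fintype.card_fin]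
    exact (hA.mono Finset.inter_subset_right).card_le_mul_finrank K
  have hJQ : (J \ P).card ≤ ∑ i : Fin b,
      finrank K ↥(⨆ e ∈ J, blockSpace K a tail head red e (Fin.natAdd a i)) := by
    refine card_le_sum_finrank_of_subset Finset.sdiff_subset
      (fun e he i => (blockSpace_eq_span K (by simp [(black e he).1])).ge) ?_
    rw [Fintype.card_fin]
    refine (hB.mono fun e he => ?_).card_le_mul_finrank K
    simpa [black e he] using hJ (Finset.mem_sdiff.mp he).1
  rw [Fin.sum_univ_add, ← Finset.card_inter_add_card_sdiff J P]
  exact Nat.add_le_add hJP hJQ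

end Sparsity

section PureCondition

open Module Submodule

variable {V E E' : Type} [DecidableEq V] {tail head : E' → V} {red : E' → Bool} {k a b : ℕ}

theorem linearIndependent_sumElim_single {K ι κ : Type*} [Ring K] [Fintype V]
    [DecidableEq κ] {x : ι → κ → V → K} (hx : LinearIndependent K x)
    (hsum : ∀ e i, ∑ v, x e i v = 0) (u : V) :
    LinearIndependent K (Sum.elim x fun i : κ => Pi.single i (Pi.single u 1)) := by
  let Φ : (κ → V → K) →ₗ[K] κ → K :=
    LinearMap.pi fun i => (∑ v, LinearMap.proj v) ∘ₗ LinearMap.proj i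
  have hker (e : ι) : x e ∈ LinearMap.ker Φ := by
    ext i
    simp [Φ, hsum]
  have hΦ (i : κ) : Φ (Pi.single i (Pi.single u 1)) = Pi.single i 1 := by
    ext j
    rcases eq_or_ne j i with rfl | hij <;> simp [Φ, *]
  refine LinearIndependent.sumElim_of_quotient (M' := LinearMap.ker Φ)
    (f := fun e => ⟨x e, hker e⟩) (LinearIndependent.of_comp (LinearMap.ker Φ).subtype hx) _ ?_
  refine LinearIndependent.of_comp ((LinearMap.ker Φ).liftQ Φ le_rfl) ?_
  simpa only [Function.comp_def, liftQ_apply, hΦ] using Pi.linearIndependent_single_one κ K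

/-- The row of the edge `e` in the rigidity matrix `M(G(p))`, as the family of its blocks: the
`i`-th block is made of the columns `(·, i)`. -/
noncomputable def rigidityRow (a : ℕ) (tail head : E' → V) (red : E' → Bool)
    (p : E' → Fin k → ℝ) (e : E') : Fin k → V → ℝ := fun i =>
  if red e = true ∧ a ≤ (i : ℕ) then 0 else p e i • incidenceVec ℝ tail head e

theorem ABSparseOn.exists_linearIndependent_rigidityRow [Finite V] [Fintype E'] [DecidableEq E']
    (h : ABSparseOn tail head red a b Finset.univ) :
    ∃ p : E' → Fin (a + b) → ℝ, LinearIndependent ℝ (rigidityRow a tail head red p) := by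
  obtain ⟨x, hx, hli⟩ := exists_linearIndependent_of_card_le_sum_finrank
    (blockSpace ℝ a tail head red)
    fun J => h.card_le_sum_finrank_blockSpace ℝ J.subset_univ
  have hscalar (e : E') (i : Fin (a + b)) : ∃ c : ℝ,
      (if red e = true ∧ a ≤ (i : ℕ) then 0 else c • incidenceVec ℝ tail head e) = x e i := by
    have hxei := hx e i
    unfold blockSpace at hxei
    split_ifs at hxei ⊢
    · exact ⟨0, ((mem_bot ℝ).mp hxei).symm⟩
    · exact mem_span_singleton.mp hxei
  choose p hp using hscalar
  refine ⟨p, ?_⟩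
  rwa [show rigidityRow a tail head red p = x from funext₂ hp]

theorem sum_rigidityRow [Fintype V] (p : E' → Fin k → ℝ) (e : E') (i : Fin k) :
    ∑ v, rigidityRow a tail head red p e i v = 0 := by
  unfold rigidityRow
  split_ifs <;> simp [incidenceVec, ← Finset.mul_sum]

theorem tail_ne_head_of_rigidityRow_ne_zero {p : E' → Fin k → ℝ} {e : E'}
    (h : rigidityRow a tail head red p e ≠ 0) : tail e ≠ head e := by
  contrapose! h
  ext i v
  simp [rigidityRow, incidenceVec, h]

variable [Fintype V]

theorem eval_pureCond (hloop : ∀ e, tail e ≠ head e) (var : E' → E) (u : V)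
    (σ : E' ⊕ Fin k ≃ V × Fin k) (q : E × Fin k → ℝ) :
    eval q (pureCond k a tail head red var u σ) =
      Matrix.det fun r c : V × Fin k =>
        Sum.elim (rigidityRow a tail head red fun e i => q (var e, i))
          (fun i => Pi.single i (Pi.single u 1)) (σ.symm r) c.2 c.1 := by
  rw [pureCond, RingHom.map_det]
  congr 1
  ext r ⟨v, j⟩
  rw [RingHom.mapMatrix_apply, Matrix.map_apply, Matrix.of_apply]
  rcases σ.symm r with e | i
  · simp only [Sum.elim_inl, rigidityRow, incidenceVec]
    split_ifs <;> simp [*]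
  · simp only [Sum.elim_inr, Pi.single_apply, Prod.mk.injEq, and_comm (a := v = u), ite_and]
    split_ifs <;> simp [*]

theorem pureCond_ne_zero [Fintype E'] [DecidableEq E']
    (h : ABSparseOn tail head red a b Finset.univ) {var : E' → E} (hvar : Function.Injective var)
    (u : V) (σ : E' ⊕ Fin (a + b) ≃ V × Fin (a + b)) :
    pureCond (a + b) a tail head red var u σ ≠ 0 := by
  obtain ⟨p, hp⟩ := h.exists_linearIndependent_rigidityRow
  let q (s : E × Fin (a + b)) : ℝ := Function.extend var p 0 s.1 s.2
  have hq : (fun e i => q (var e, i)) = p := by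
    ext e i
    simp only [q, hvar.extend_apply]
  have hloop (e : E') : tail e ≠ head e := tail_ne_head_of_rigidityRow_ne_zero (hp.ne_zero e)
  have hrows := (linearIndependent_sumElim_single hp (sum_rigidityRow p) u).comp _ σ.symm.injective
  let uncurry : (Fin (a + b) → V → ℝ) →ₗ[ℝ] V × Fin (a + b) → ℝ :=
    LinearMap.pi fun c => LinearMap.proj c.1 ∘ₗ LinearMap.proj c.2
  have huncurry : Function.Injective uncurry := fun y z hyz =>
    funext₂ fun i v => congrFun hyz (v, i)
  have hunit := Matrix.linearIndependent_rows_iff_isUnit.mp <|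
    hrows.map_injOn uncurry huncurry.injOn
  intro hzero
  have heval := eval_pureCond (a := a) (red := red) hloop var u σ q
  rw [hzero, map_zero, hq] at heval
  exact ((Matrix.isUnit_iff_isUnit_det _).mp hunit).ne_zero heval.symm

theorem isWeightedHomogeneous_pureCond [Fintype E'] (w : E → ℕ) (var : E' → E) (u : V)
    (σ : E' ⊕ Fin k ≃ V × Fin k) :
    IsWeightedHomogeneous (fun s : E × Fin k => w s.1)
      (pureCond k a tail head red var u σ) (∑ e, w (var e)) := by
  have hdegree : ∑ r, Sum.elim (fun e => w (var e)) (fun _ => 0) (σ.symm r) = ∑ e, w (var e) := by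
    rw [Equiv.sum_comp σ.symm (Sum.elim _ _), Fintype.sum_sum_type]
    simp
  rw [← hdegree]
  refine isWeightedHomogeneous_det fun r c => ?_
  rw [Matrix.of_apply]
  rcases σ.symm r with e | i
  · have hX := isWeightedHomogeneous_X ℝ (fun s : E × Fin k => w s.1) (var e, c.2)
    simp only [Sum.elim_inl]
    split_ifs
    · exact isWeightedHomogeneous_zero _ _ _
    · exact hX
    · exact (weightedHomogeneousSubmodule ℝ _ _).neg_mem hX
    · exact isWeightedHomogeneous_zero _ _ _
  · simp only [Sum.elim_inr]
    split_ifs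
    · exact isWeightedHomogeneous_one _ _
    · exact isWeightedHomogeneous_zero _ _ _

end PureCondition

theorem stmt14_general {V E E' : Type} [Fintype V] [DecidableEq V] [DecidableEq E]
    [Fintype E'] [DecidableEq E'] (tail head : E' → V) (red : E' → Bool) (a b : ℕ)
    (hsparse : ABSparseOn tail head red a b (Finset.univ : Finset E'))
    (var : E' → E) (hvar : Function.Injective var)
    (u : V) (σ : (E' ⊕ Fin (a + b)) ≃ (V × Fin (a + b)))
    (f : MvPolynomial (E × Fin (a + b)) ℝ)
    (hdvd : f ∣ pureCond (a + b) a tail head red var u σ)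
    (e : E) (he : InSupport f e) :
    ∀ m ∈ f.support, ∃ i : Fin (a + b), 0 < m (e, i) := by
  intro m hm
  obtain ⟨i, hi⟩ := he
  let w : E → ℕ := Pi.single e 1
  obtain ⟨d, hd⟩ := isWeightedHomogeneous_of_dvd (isWeightedHomogeneous_pureCond w var u σ)
    (pureCond_ne_zero hsparse hvar u σ) hdvd
  obtain ⟨⟨e', j⟩, hj, hwj⟩ :=
    exists_mem_support_of_isWeightedHomogeneous hd hi (by simp [w]) hm
  obtain rfl : e' = e := by
    by_contra hne
    exact hwj (Pi.single_eq_of_ne hne 1)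
  exact ⟨j, Nat.pos_of_ne_zero (Finsupp.mem_support_iff.mp hj)⟩

/-- if `e` is in the support of an irreducible factor `f` of the pure
condition, then every monomial of `f` is divisible by some variable `X (e, i)`. -/
theorem stmt14 {n : ℕ} {E : Type} [Fintype E] [DecidableEq E]
    (tail head : E → Fin n) (hlt : ∀ e, tail e < head e)
    (red : E → Bool) (a b : ℕ) (ha : 0 < a) (hb : 0 < b)
    (hsparse : ABSparseOn tail head red a b (Finset.univ : Finset E))
    (hE : Fintype.card E = (a + b) * n - (a + b))
    (u : Fin n) (σ : (E ⊕ Fin (a + b)) ≃ (Fin n × Fin (a + b)))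
    (f : MvPolynomial (E × Fin (a + b)) ℝ) (hf : Irreducible f)
    (hdvd : f ∣ pureCond (a + b) a tail head red id u σ)
    (e : E) (he : InSupport f e) :
    ∀ m ∈ f.support, ∃ i : Fin (a + b), 0 < m (e, i) :=
  stmt14_general tail head red a b hsparse id Function.injective_id u σ f hdvd e he
end
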